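/- arXiv:1611.03953 — 3 statements merged into one kernel-verified Lean document; each statement's English description precedes it below -/
import Mathlib

section
/- Let k be a field of characteristic different from 2 and let α, α' ∈ k with α, α' ∉ {0, 1, −1} and α ≠ α'. With S_β = [[0,1],[β,0]] and T_β = [[1,−β⁻¹],[1,−1]] for β ∈ {α, α'}: for every M ∈ {S_α, T_α, S_α·T_α}, every N ∈ {S_{α'}, T_{α'}, S_{α'}·T_{α'}}, and every c ∈ k, one has M ≠ c·N. Consequently the Klein four-subgroups of PGL₂(k) generated by the images of {S_α, T_α} and of {S_{α'}, T_{α'}} intersect trivially. -/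
/-- The elements of the subgroup generated by two commuting involutions. -/
theorem mem_closure_klein {G : Type*} [Group G] (a b : G) (ha : a * a = 1) (hb : b * b = 1)
    (hab : b * a = a * b) (x : G) (hx : x ∈ Subgroup.closure {a, b}) :
    x = 1 ∨ x = a ∨ x = b ∨ x = a * b := by
  have hai : a⁻¹ = a := inv_eq_of_mul_eq_one_left ha
  have hbi : b⁻¹ = b := inv_eq_of_mul_eq_one_left hb
  have h1 : ∀ y, a * (a * y) = y := fun y => by rw [← mul_assoc, ha, one_mul]
  have h2 : ∀ y, b * (b * y) = y := fun y => by rw [← mul_assoc, hb, one_mul]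
  have h3 : ∀ y, b * (a * y) = a * (b * y) := fun y => by rw [← mul_assoc, hab, mul_assoc]
  induction hx using Subgroup.closure_induction with
  | mem x hx =>
    rcases hx with rfl | rfl <;> simp
  | one => simp
  | mul x y _ _ hx hy =>
    rcases hx with rfl | rfl | rfl | rfl <;> rcases hy with rfl | rfl | rfl | rfl <;>
      simp [mul_assoc, h1, h3, ha, hb, hab]
  | inv x _ hx =>
    rcases hx with rfl | rfl | rfl | rfl <;> simp [hai, hbi, hab]

/-- Two invertible matrices with the same class in `PGL₂` are proportional. -/
theorem exists_smul_of_mk_eq {k : Type*} [Field k] (u v : GL (Fin 2) k)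
    (h : (QuotientGroup.mk u : GL (Fin 2) k ⧸ Subgroup.center (GL (Fin 2) k)) =
      QuotientGroup.mk v) :
    ∃ c : k, (u : Matrix (Fin 2) (Fin 2) k) = c • (v : Matrix (Fin 2) (Fin 2) k) := by
  have h' := QuotientGroup.eq.mp h.symm
  rw [Matrix.GeneralLinearGroup.center_eq_range_scalar] at h'
  obtain ⟨c, hc⟩ := h'
  refine ⟨c, ?_⟩
  have : u = v * Matrix.GeneralLinearGroup.scalar (Fin 2) c := by rw [hc]; group
  rw [this]
  ext i j
  simp [mul_comm]

/-- Proportional invertible matrices have the same class in `PGL₂`. -/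
theorem mk_eq_of_smul {k : Type*} [Field k] (u v : GL (Fin 2) k) (c : k) (hc : c ≠ 0)
    (h : (u : Matrix (Fin 2) (Fin 2) k) = c • (v : Matrix (Fin 2) (Fin 2) k)) :
    (QuotientGroup.mk u : GL (Fin 2) k ⧸ Subgroup.center (GL (Fin 2) k)) =
      QuotientGroup.mk v := by
  symm
  rw [QuotientGroup.eq, Matrix.GeneralLinearGroup.center_eq_range_scalar]
  refine ⟨Units.mk0 c hc, ?_⟩
  rw [eq_inv_mul_iff_mul_eq]
  ext i j
  simp [h, mul_comm]

/-- The subgroup generated by the classes of `S_β` and `T_β`. -/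
theorem mem_closure_pgl {k : Type*} [Field k] (β : k) (h0 : β ≠ 0) (h1 : β ≠ 1)
    (u v : GL (Fin 2) k) (hu : (u : Matrix (Fin 2) (Fin 2) k) = !![0, 1; β, 0])
    (hv : (v : Matrix (Fin 2) (Fin 2) k) = !![1, -β⁻¹; 1, -1])
    (x : GL (Fin 2) k ⧸ Subgroup.center (GL (Fin 2) k))
    (hx : x ∈ Subgroup.closure
      {(QuotientGroup.mk u : GL (Fin 2) k ⧸ Subgroup.center (GL (Fin 2) k)),
        QuotientGroup.mk v}) :
    x = 1 ∨ ∃ w : GL (Fin 2) k, x = QuotientGroup.mk w ∧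
      (w : Matrix (Fin 2) (Fin 2) k) ∈ ({!![0, 1; β, 0], !![1, -β⁻¹; 1, -1],
        !![0, 1; β, 0] * !![1, -β⁻¹; 1, -1]} : Set (Matrix (Fin 2) (Fin 2) k)) := by
  have hβ : 1 - β⁻¹ ≠ 0 := by
    intro h
    apply h1
    field_simp at h
    linear_combination h
  have key : x = 1 ∨ x = QuotientGroup.mk u ∨ x = QuotientGroup.mk v ∨
      x = QuotientGroup.mk (u * v) := by
    refine mem_closure_klein _ _ ?_ ?_ ?_ x hx
    · refine mk_eq_of_smul (u * u) 1 β h0 ?_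
      rw [Units.val_mul, hu]
      ext i j
      fin_cases i <;> fin_cases j <;> simp
    · refine mk_eq_of_smul (v * v) 1 (1 - β⁻¹) hβ ?_
      rw [Units.val_mul, hv]
      ext i j
      fin_cases i <;> fin_cases j <;> simp <;> ring
    · refine mk_eq_of_smul (v * u) (u * v) (-1) (by simp) ?_
      rw [Units.val_mul, Units.val_mul, hu, hv]
      ext i j
      fin_cases i <;> fin_cases j <;> simp [h0]
  rcases key with h | h | h | h
  · exact Or.inl h
  · exact Or.inr ⟨u, h, by simp [hu]⟩
  · exact Or.inr ⟨v, h, by simp [hv]⟩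
  · refine Or.inr ⟨u * v, h, ?_⟩
    rw [Units.val_mul, hu, hv]
    exact Or.inr (Or.inr rfl)


/-- For distinct `α, α' ∉ {0,1,-1}`, no element of `{S_α, T_α, S_α T_α}` is a scalar
multiple of an element of `{S_{α'}, T_{α'}, S_{α'} T_{α'}}`; consequently the Klein
four-subgroups of `PGL₂(k)` generated by the images of `{S_α, T_α}` and
`{S_{α'}, T_{α'}}` intersect trivially. -/
theorem klein_four_subgroups_intersect_trivially
    (k : Type*) [Field k] (h2 : (2 : k) ≠ 0)
    (α α' : k) (h0 : α ≠ 0) (h1 : α ≠ 1) (hm1 : α ≠ -1)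
    (h0' : α' ≠ 0) (h1' : α' ≠ 1) (hm1' : α' ≠ -1) (hne : α ≠ α') :
    (∀ M ∈ ({!![0, 1; α, 0], !![1, -α⁻¹; 1, -1],
        !![0, 1; α, 0] * !![1, -α⁻¹; 1, -1]} : Set (Matrix (Fin 2) (Fin 2) k)),
      ∀ N ∈ ({!![0, 1; α', 0], !![1, -α'⁻¹; 1, -1],
        !![0, 1; α', 0] * !![1, -α'⁻¹; 1, -1]} : Set (Matrix (Fin 2) (Fin 2) k)),
      ∀ c : k, M ≠ c • N) ∧
    ∀ u₁ v₁ u₂ v₂ : GL (Fin 2) k,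
      (↑u₁ : Matrix (Fin 2) (Fin 2) k) = !![0, 1; α, 0] →
      (↑v₁ : Matrix (Fin 2) (Fin 2) k) = !![1, -α⁻¹; 1, -1] →
      (↑u₂ : Matrix (Fin 2) (Fin 2) k) = !![0, 1; α', 0] →
      (↑v₂ : Matrix (Fin 2) (Fin 2) k) = !![1, -α'⁻¹; 1, -1] →
      Subgroup.closure
          {(QuotientGroup.mk u₁ : GL (Fin 2) k ⧸ Subgroup.center (GL (Fin 2) k)),
            QuotientGroup.mk v₁} ⊓
        Subgroup.closure
          {(QuotientGroup.mk u₂ : GL (Fin 2) k ⧸ Subgroup.center (GL (Fin 2) k)),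
            QuotientGroup.mk v₂} = ⊥ := by
  have key : ∀ M ∈ ({!![0, 1; α, 0], !![1, -α⁻¹; 1, -1],
        !![0, 1; α, 0] * !![1, -α⁻¹; 1, -1]} : Set (Matrix (Fin 2) (Fin 2) k)),
      ∀ N ∈ ({!![0, 1; α', 0], !![1, -α'⁻¹; 1, -1],
        !![0, 1; α', 0] * !![1, -α'⁻¹; 1, -1]} : Set (Matrix (Fin 2) (Fin 2) k)),
      ∀ c : k, M ≠ c • N := by
    intro M hM N hN c h
    have e00 := congrFun (congrFun h 0) 0
    have e01 := congrFun (congrFun h 0) 1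
    have e10 := congrFun (congrFun h 1) 0
    have e11 := congrFun (congrFun h 1) 1
    rcases hM with rfl | rfl | rfl <;> rcases hN with rfl | rfl | rfl <;>
      simp [h0, h0'] at e00 e01 e10 e11 <;> grind
  refine ⟨key, ?_⟩
  intro u₁ v₁ u₂ v₂ hu₁ hv₁ hu₂ hv₂
  rw [eq_bot_iff]
  rintro x ⟨hx1, hx2⟩
  rw [Subgroup.mem_bot]
  rcases mem_closure_pgl α h0 h1 u₁ v₁ hu₁ hv₁ x hx1 with h | ⟨w, hw, hw'⟩
  · exact h
  rcases mem_closure_pgl α' h0' h1' u₂ v₂ hu₂ hv₂ x hx2 with h | ⟨z, hz, hz'⟩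
  · exact h
  obtain ⟨c, hc⟩ := exists_smul_of_mk_eq w z (hw.symm.trans hz)
  exact absurd hc (key _ hw' _ hz' c)
end

section
/- Let k be a field of characteristic different from 2 and let α ∈ k satisfy α² + α − 1 = 0. Let D = [[0,1],[α−1,1]] over k. Then there exists a nonzero c ∈ k with D⁵ = c·I, while D is not a scalar matrix; consequently the image of D in PGL₂(k) has order exactly 5. -/
/-- For `α` with `α² + α - 1 = 0` in a field of characteristic ≠ 2, the matrix
`D = !![0,1;α-1,1]` satisfies `D⁵ = c • 1` for some nonzero scalar `c`, while `D`
itself is not scalar; consequently the image of `D` in `PGL₂(k)` has order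
exactly `5`. -/
theorem matrix_D_order_five_in_PGL
    (k : Type*) [Field k] (h2 : (2 : k) ≠ 0)
    (α : k) (hα : α ^ 2 + α - 1 = 0) :
    (∃ c : k, c ≠ 0 ∧
      (!![0, 1; α - 1, 1] : Matrix (Fin 2) (Fin 2) k) ^ 5 =
        c • (1 : Matrix (Fin 2) (Fin 2) k)) ∧
    (¬ ∃ c : k, (!![0, 1; α - 1, 1] : Matrix (Fin 2) (Fin 2) k) =
        c • (1 : Matrix (Fin 2) (Fin 2) k)) ∧
    ∀ u : GL (Fin 2) k, (↑u : Matrix (Fin 2) (Fin 2) k) = !![0, 1; α - 1, 1] →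
      orderOf (QuotientGroup.mk u :
        GL (Fin 2) k ⧸ Subgroup.center (GL (Fin 2) k)) = 5 := by
  have h5 : (!![0, 1; α - 1, 1] : Matrix (Fin 2) (Fin 2) k) ^ 5 =
      ((α - 1) * (2 * α - 1)) • (1 : Matrix (Fin 2) (Fin 2) k) := by
    ext i j
    fin_cases i <;> fin_cases j <;> simp [pow_succ, Matrix.mul_apply, Fin.sum_univ_two]
    · ring
    · linear_combination hα
    · left; linear_combination hα
    · linear_combination hα
  have hD : ¬ ∃ c : k, (!![0, 1; α - 1, 1] : Matrix (Fin 2) (Fin 2) k) =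
        c • (1 : Matrix (Fin 2) (Fin 2) k) := by
    rintro ⟨c, hc⟩
    have := congrFun (congrFun hc 0) 1
    simp at this
  refine ⟨⟨_, ?_, h5⟩, hD, ?_⟩
  · intro h
    rcases mul_eq_zero.mp h with h | h
    · have : (1 : k) = 0 := by linear_combination hα - (α + 2) * h
      exact one_ne_zero this
    · have : (1 : k) = 0 := by linear_combination (2 * α + 3) * h - 4 * hα
      exact one_ne_zero this
  · intro u hu
    have : Fact (Nat.Prime 5) := ⟨by norm_num⟩
    apply orderOf_eq_prime
    · rw [← QuotientGroup.mk_pow, QuotientGroup.eq_one_iff,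
        Matrix.GeneralLinearGroup.mem_center_iff_val_mem_range_scalar]
      refine ⟨(α - 1) * (2 * α - 1), ?_⟩
      rw [Units.val_pow_eq_pow_val, hu, h5, Matrix.smul_one_eq_diagonal]
      rfl
    · rw [Ne, QuotientGroup.eq_one_iff,
        Matrix.GeneralLinearGroup.mem_center_iff_val_mem_range_scalar]
      rintro ⟨c, hc⟩
      refine hD ⟨c, ?_⟩
      rw [← hu, ← hc, Matrix.smul_one_eq_diagonal]
      rfl
end

section
/- Let k be a field of characteristic different from 2 and let α ∈ k satisfy α² + α − 1 = 0. Let C = [[1,−1],[1,−α]] and D = [[0,1],[α−1,1]] over k. Then for all i, j ∈ {1,2,3,4} and all c ∈ k, Cⁱ ≠ c·Dʲ. Consequently, the cyclic subgroups of order 5 of PGL₂(k) generated by the images of C and of D intersect trivially. -/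
theorem aux_comm {k : Type*} [Field k] (α : k) (hα : α ^ 2 + α - 1 = 0)
    (w : Matrix (Fin 2) (Fin 2) k)
    (hC : w * !![1, -1; 1, -α] = !![1, -1; 1, -α] * w)
    (hD : w * !![0, 1; α - 1, 1] = !![0, 1; α - 1, 1] * w) :
    w 0 1 = 0 ∧ w 1 0 = 0 ∧ w 0 0 = w 1 1 := by
  have h0 : α ≠ 0 := by
    rintro rfl
    simp at hα
  have c00 := congrFun (congrFun hC 0) 0
  have c01 := congrFun (congrFun hC 0) 1
  have d00 := congrFun (congrFun hD 0) 0
  simp [Matrix.mul_apply, Fin.sum_univ_two] at c00 c01 d00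
  have hq : w 0 1 = 0 := by
    have : α * w 0 1 = 0 := by linear_combination c00 + d00
    exact (mul_eq_zero.mp this).resolve_left h0
  refine ⟨hq, ?_, ?_⟩
  · rw [← d00, hq, zero_mul]
  · rw [hq] at c01
    linear_combination -c01

/-- For `α` with `α² + α - 1 = 0`, `C = !![1,-1;1,-α]` and `D = !![0,1;α-1,1]`:
no power `Cⁱ` (`i ∈ {1,2,3,4}`) is a scalar multiple of a power `Dʲ`
(`j ∈ {1,2,3,4}`); consequently the cyclic order-5 subgroups of `PGL₂(k)`
generated by the images of `C` and `D` intersect trivially. -/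
theorem C_D_generate_trivially_intersecting_subgroups
    (k : Type*) [Field k] (h2 : (2 : k) ≠ 0)
    (α : k) (hα : α ^ 2 + α - 1 = 0) :
    (∀ i ∈ ({1, 2, 3, 4} : Set ℕ), ∀ j ∈ ({1, 2, 3, 4} : Set ℕ), ∀ c : k,
      (!![1, -1; 1, -α] : Matrix (Fin 2) (Fin 2) k) ^ i ≠
        c • (!![0, 1; α - 1, 1] : Matrix (Fin 2) (Fin 2) k) ^ j) ∧
    ∀ u v : GL (Fin 2) k,
      (↑u : Matrix (Fin 2) (Fin 2) k) = !![1, -1; 1, -α] →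
      (↑v : Matrix (Fin 2) (Fin 2) k) = !![0, 1; α - 1, 1] →
      Subgroup.zpowers (QuotientGroup.mk u :
          GL (Fin 2) k ⧸ Subgroup.center (GL (Fin 2) k)) ⊓
        Subgroup.zpowers (QuotientGroup.mk v :
          GL (Fin 2) k ⧸ Subgroup.center (GL (Fin 2) k)) = ⊥ := by
  have h0 : α ≠ 0 := by
    rintro rfl
    simp at hα
  have h1 : α + 1 ≠ 0 := by
    intro h
    have : (1 : k) = 0 := by linear_combination α * h - hα
    exact one_ne_zero this
  constructor
  · intro i hi j _ c h
    have hw := aux_comm α hα (!![1, -1; 1, -α] ^ i)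
      ((Commute.refl _).pow_left i)
      (by rw [h]; exact ((Commute.refl _).pow_left j).smul_left c)
    have hw := hw.2.1
    simp only [Set.mem_insert_iff, Set.mem_singleton_iff] at hi
    rcases hi with rfl | rfl | rfl | rfl
    · simp at hw
    · simp [pow_succ] at hw
      apply pow_ne_zero 2 h0
      linear_combination hw + hα
    · simp [pow_succ] at hw
      apply pow_ne_zero 3 h0
      linear_combination -hw + α * hα
    · simp [pow_succ] at hw
      apply mul_ne_zero (pow_ne_zero 4 h0) h1
      linear_combination -hw + (α ^ 2 + 1 - α) * (α + 1) * hα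
  · intro u v hu hv
    rw [eq_bot_iff]
    rintro x ⟨hx, hy⟩
    obtain ⟨m, rfl⟩ := Subgroup.mem_zpowers_iff.mp hx
    obtain ⟨n, hn⟩ := Subgroup.mem_zpowers_iff.mp hy
    rw [Subgroup.mem_bot]
    rw [← QuotientGroup.mk_zpow, ← QuotientGroup.mk_zpow, QuotientGroup.eq] at hn
    rw [← QuotientGroup.mk_zpow, QuotientGroup.eq_one_iff]
    have hcu : Commute (u ^ m) u := (Commute.refl u).zpow_left m
    have hcv : Commute (u ^ m) v := by
      have e : u ^ m = v ^ n * ((v ^ n)⁻¹ * u ^ m) := by group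
      rw [e]
      exact ((Commute.refl v).zpow_left n).mul_left
        (Subgroup.mem_center_iff.mp hn v).symm
    generalize u ^ m = w at hcu hcv
    have a1 := congrArg (fun g : GL (Fin 2) k => (g : Matrix (Fin 2) (Fin 2) k)) hcu.eq
    have a2 := congrArg (fun g : GL (Fin 2) k => (g : Matrix (Fin 2) (Fin 2) k)) hcv.eq
    simp only [Units.val_mul, hu, hv] at a1 a2
    obtain ⟨e1, e2, e3⟩ := aux_comm α hα _ a1 a2
    rw [Subgroup.mem_center_iff]
    intro g
    ext i j
    fin_cases i <;> fin_cases j <;>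
      simp [Matrix.mul_apply, Fin.sum_univ_two, e1, e2, e3, mul_comm]
end
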